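/- For D ≤ 2, two continuous ℤ^D-periodic families of unitary m×m matrices α_0, α_1 are homotopic through continuous ℤ^D-periodic unitary families if and only if deg_j(det α_0) = deg_j(det α_1) for all j ∈ {1,…,D}, where deg_j denotes the winding number of the determinant along the j-th coordinate. -/

import Mathlib

/-- `n` is the winding number of the (unit-circle valued) map `u : ℝ → ℂ` over one
period: there is a continuous argument `θ` of `u` with `θ 1 = θ 0 + 2πn`. -/
def IsWindingNumber (u : ℝ → ℂ) (n : ℤ) : Prop :=
  ∃ θ : ℝ → ℝ, Continuous θ ∧ (∀ t, u t = Complex.exp (Complex.I * (θ t : ℂ))) ∧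
    θ 1 = θ 0 + 2 * Real.pi * (n : ℝ)

set_option linter.unusedSectionVars false
set_option linter.unusedSimpArgs false

namespace HW
open Matrix
open scoped ComplexOrder

section Hom
variable {D : ℕ} {R : Type*} [Monoid R] [StarMul R] [TopologicalSpace R] [ContinuousMul R] [ContinuousStar R]

/-- continuous periodic unitary families -/
def Fam (β : (Fin D → ℝ) → R) : Prop :=
  Continuous β ∧ (∀ k, β k ∈ unitary R) ∧
    ∀ (k : Fin D → ℝ) (n : Fin D → ℤ), β (k + fun i => (n i : ℝ)) = β k

/-- homotopy of families -/
def Homo (β γ : (Fin D → ℝ) → R) : Prop :=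
  ∃ A : ℝ → (Fin D → ℝ) → R,
      Continuous (fun p : ℝ × (Fin D → ℝ) => A p.1 p.2) ∧
      (∀ t k, A t k ∈ unitary R) ∧
      (∀ (t : ℝ) (k : Fin D → ℝ) (n : Fin D → ℤ),
        A t (k + fun i => (n i : ℝ)) = A t k) ∧
      (∀ k, A 0 k = β k) ∧ (∀ k, A 1 k = γ k)

lemma Homo.symm {β γ : (Fin D → ℝ) → R} (h : Homo β γ) : Homo γ β := by
  obtain ⟨A, hc, hu, hp, h0, h1⟩ := h
  refine ⟨fun t => A (1 - t), ?_, fun t => hu _, fun t => hp _, by simpa using h1, by simpa using h0⟩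
  exact hc.comp (g := fun p : ℝ × (Fin D → ℝ) => A p.1 p.2) 
    (f := fun p : ℝ × (Fin D → ℝ) => (1 - p.1, p.2)) (by fun_prop)

lemma Homo.fam_right {β γ : (Fin D → ℝ) → R} (h : Homo β γ) : Fam γ := by
  obtain ⟨A, hc, hu, hp, h0, h1⟩ := h
  obtain rfl : A 1 = γ := funext h1
  exact ⟨hc.comp (g := fun p : ℝ × (Fin D → ℝ) => A p.1 p.2) 
    (f := fun p : (Fin D → ℝ) => (1, p)) (by fun_prop), hu 1, hp 1⟩

lemma Homo.fam_left {β γ : (Fin D → ℝ) → R} (h : Homo β γ) : Fam β := h.symm.fam_right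

lemma Homo.trans {β γ δ : (Fin D → ℝ) → R} (h : Homo β γ) (h' : Homo γ δ) : Homo β δ := by
  have hγ := h.fam_right
  obtain ⟨A, hc, hu, hp, h0, h1⟩ := h
  obtain ⟨B, hc', hu', hp', h0', h1'⟩ := h'
  refine ⟨fun t k => A t k * star (γ k) * B t k, ?_, ?_, ?_, ?_, ?_⟩
  · exact (hc.mul (hγ.1.comp continuous_snd).star).mul hc'
  · intro t k
    exact mul_mem (mul_mem (hu t k) (Unitary.star_mem (hγ.2.1 k))) (hu' t k)
  · intro t k n
    simp only [hp, hp', hγ.2.2]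
  · intro k
    simp only [h0, h0', mul_assoc, (Unitary.mem_iff.1 (hγ.2.1 k)).1, mul_one]
  · intro k
    simp only [h1, h1', (Unitary.mem_iff.1 (hγ.2.1 k)).2, one_mul]

lemma Homo.mul_left {β γ δ : (Fin D → ℝ) → R} (hδ : Fam δ) (h : Homo β γ) :
    Homo (fun k => δ k * β k) (fun k => δ k * γ k) := by
  obtain ⟨A, hc, hu, hp, h0, h1⟩ := h
  refine ⟨fun t k => δ k * A t k, (hδ.1.comp continuous_snd).mul hc,
    fun t k => mul_mem (hδ.2.1 k) (hu t k), fun t k n => by simp only [hp, hδ.2.2], 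
    fun k => by simp only [h0], fun k => by simp only [h1]⟩

end Hom

lemma Homo.det {D m : ℕ} {β γ : (Fin D → ℝ) → Matrix (Fin m) (Fin m) ℂ} (h : Homo β γ) :
    Homo (fun k => (β k).det) (fun k => (γ k).det) := by
  obtain ⟨A, hc, hu, hp, h0, h1⟩ := h
  refine ⟨fun t k => (A t k).det, hc.matrix_det,
    fun t k => Matrix.det_of_mem_unitary (hu t k), fun t k n => by simp only [hp], 
    fun k => by simp only [h0], fun k => by simp only [h1]⟩

/-- pseudo-reflection -/
noncomputable def HH {m : ℕ} (u : Fin m → ℂ) (b : ℝ) : Matrix (Fin m) (Fin m) ℂ :=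
  1 - (((star u ⬝ᵥ u) / 2 + Complex.I * b)⁻¹ : ℂ) • vecMulVec u (star u)

lemma star_dot_real {m : ℕ} (u : Fin m → ℂ) : star (star u ⬝ᵥ u) = star u ⬝ᵥ u := by
  rw [← star_dotProduct_star, star_star, dotProduct_comm]
  

lemma HH_den {m : ℕ} {u : Fin m → ℂ} (hu : u ≠ 0) (b : ℝ) :
    (star u ⬝ᵥ u) / 2 + Complex.I * b ≠ 0 := by
  intro h
  have h1 := congrArg star h
  simp only [star_add, star_mul', star_div₀, star_dot_real, Complex.star_def, Complex.conj_I, Complex.conj_ofReal, map_zero, map_ofNat] at h1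
  have : star u ⬝ᵥ u = 0 := by linear_combination h + h1
  exact hu (dotProduct_star_self_eq_zero.1 this)

lemma HH_unitary {m : ℕ} {u : Fin m → ℂ} (hu : u ≠ 0) (b : ℝ) :
    HH u b ∈ unitaryGroup (Fin m) ℂ := by
  have hc := HH_den hu b
  rw [mem_unitaryGroup_iff, HH]
  set c := (star u ⬝ᵥ u) / 2 + Complex.I * b with hcd
  have hc' : star c ≠ 0 := by simpa using hc
  have hs : c + star c = star u ⬝ᵥ u := by
    simp only [hcd, star_add, star_mul', star_div₀, star_dot_real, Complex.star_def, Complex.conj_I, Complex.conj_ofReal, map_zero, map_ofNat]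
    ring
  have hst : star (vecMulVec u (star u)) = vecMulVec u (star u) := by
    rw [star_eq_conjTranspose, conjTranspose_vecMulVec, star_star]
  have hm : vecMulVec u (star u) * vecMulVec u (star u) = (star u ⬝ᵥ u) • vecMulVec u (star u) := by
    rw [vecMulVec_mul_vecMulVec]
    ext i j; simp [vecMulVec_apply]; ring
  rw [star_sub, star_one, star_smul, hst, sub_mul, mul_sub, mul_sub, one_mul, mul_one, one_mul,
    smul_mul_smul_comm, hm, ← hs, star_inv₀, smul_smul]
  have : c⁻¹ * (star c)⁻¹ * (c + star c) = c⁻¹ + (star c)⁻¹ := by field_simp; ring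
  rw [this, add_smul]; abel

lemma HH_mulVec {m : ℕ} (u v : Fin m → ℂ) (b : ℝ) :
    HH u b *ᵥ v = v - (((star u ⬝ᵥ u) / 2 + Complex.I * b)⁻¹ * (star u ⬝ᵥ v)) • u := by
  rw [HH, sub_mulVec, one_mulVec, smul_mulVec, vecMulVec_mulVec]
  simp [smul_smul]

lemma col_unit {m : ℕ} {B : Matrix (Fin (m+1)) (Fin (m+1)) ℂ} (h : B ∈ unitaryGroup (Fin (m+1)) ℂ) :
    star (B *ᵥ Pi.single 0 1) ⬝ᵥ (B *ᵥ Pi.single 0 1) = 1 := by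
  rw [star_mulVec, dotProduct_mulVec, vecMul_vecMul, ← star_eq_conjTranspose, (mem_unitaryGroup_iff'.1 h),
    vecMul_one]
  simp

lemma ne_aux {m : ℕ} {v w : Fin m → ℂ} (hv : star v ⬝ᵥ v = 1) (hw : star w ⬝ᵥ w = 1) (h : w ≠ -v) (s : ℝ) :
    ((2 - s : ℝ) : ℂ) • v + (s : ℂ) • w ≠ 0 := by
  intro h0
  have h1 : ((2 - s : ℝ) : ℂ) • v = (-s : ℂ) • w := by
    rw [neg_smul]; exact eq_neg_of_add_eq_zero_left h0
  have h2 : star (((2 - s : ℝ) : ℂ) • v) ⬝ᵥ (((2 - s : ℝ) : ℂ) • v) = star ((-s : ℂ) • w) ⬝ᵥ ((-s : ℂ) • w) := by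
    rw [h1]
  simp only [star_smul, smul_dotProduct, dotProduct_smul, hv, hw] at h2
  simp only [Complex.star_def, smul_eq_mul, mul_one, Complex.conj_ofReal, map_neg] at h2
  have h3 : (2 - s) * (2 - s) = (-s) * (-s) := by exact_mod_cast h2
  obtain rfl : s = 1 := by linarith
  apply h
  norm_num at h0
  exact eq_neg_of_add_eq_zero_right h0

lemma move {D m : ℕ} {β : (Fin D → ℝ) → Matrix (Fin (m+1)) (Fin (m+1)) ℂ} (hβ : Fam β)
    (w : (Fin D → ℝ) → (Fin (m+1) → ℂ)) (hwc : Continuous w)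
    (hwp : ∀ (k : Fin D → ℝ) (n : Fin D → ℤ), w (k + fun i => (n i : ℝ)) = w k)
    (hw1 : ∀ k, star (w k) ⬝ᵥ w k = 1) (hne : ∀ k, w k ≠ -(β k *ᵥ Pi.single 0 1)) :
    ∃ γ, Homo β γ ∧ ∀ k, γ k *ᵥ Pi.single 0 1 = w k := by
  obtain ⟨hc, hu, hp⟩ := hβ
  set v : (Fin D → ℝ) → (Fin (m+1) → ℂ) := fun k => β k *ᵥ Pi.single 0 1 with hv
  have hv1 : ∀ k, star (v k) ⬝ᵥ v k = 1 := fun k => col_unit (hu k)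
  have hvc : Continuous v := hc.matrix_mulVec continuous_const
  have hvp : ∀ (k : Fin D → ℝ) (n : Fin D → ℤ), v (k + fun i => (n i : ℝ)) = v k := by
    intro k n; simp only [hv, hp]
  let b : (Fin D → ℝ) → ℝ := fun k => (star (w k) ⬝ᵥ v k).im
  let U : ℝ → (Fin D → ℝ) → (Fin (m+1) → ℂ) := fun s k => ((2 - s : ℝ) : ℂ) • v k + (s : ℂ) • w k
  have hU0 : ∀ s k, U s k ≠ 0 := fun s k => ne_aux (hv1 k) (hw1 k) (hne k) s
  have hUc : Continuous (fun p : ℝ × (Fin D → ℝ) => U p.1 p.2) := by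
    have h1 := hvc.comp (continuous_snd (X := ℝ))
    have h2 := hwc.comp (continuous_snd (X := ℝ))
    simp only [Function.comp_def] at h1 h2
    simp only [U]; fun_prop
  have hbc : Continuous b := by
    simp only [b]
    exact Complex.continuous_im.comp (hwc.star.dotProduct hvc)
  let G : ℝ → (Fin D → ℝ) → Matrix (Fin (m+1)) (Fin (m+1)) ℂ := fun s k =>
    HH (U s k) (s * b k)
  have hGc : Continuous (fun p : ℝ × (Fin D → ℝ) => G p.1 p.2) := by
    simp only [G, HH]
    refine continuous_const.sub (Continuous.smul (Continuous.inv₀ ?_ fun p => HH_den (hU0 _ _) _)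
      (hUc.matrix_vecMulVec hUc.star))
    refine ((hUc.star.dotProduct hUc).div_const _).add (continuous_const.mul ?_)
    exact Complex.continuous_ofReal.comp (continuous_fst.mul (hbc.comp continuous_snd))
  have hG0c : Continuous (fun k => G 0 k) := hGc.comp (f := fun k => ((0:ℝ), k)) (by fun_prop)
  have hGu : ∀ s k, G s k ∈ unitaryGroup (Fin (m+1)) ℂ := fun s k => HH_unitary (hU0 s k) _
  have hGp : ∀ s (k : Fin D → ℝ) (n : Fin D → ℤ), G s (k + fun i => (n i : ℝ)) = G s k := by
    intro s k n; simp only [G, U, b, hvp, hwp]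
  refine ⟨fun k => G 1 k * star (G 0 k) * β k, ⟨fun s k => G s k * star (G 0 k) * β k, ?_, ?_, ?_, ?_, ?_⟩, ?_⟩
  · exact (hGc.mul (hG0c.comp continuous_snd).star).mul (hc.comp continuous_snd)
  · exact fun s k => mul_mem (mul_mem (hGu s k) (Unitary.star_mem (hGu 0 k))) (hu k)
  · intro s k n; simp only [hGp, hp]
  · intro k
    simp only [(mem_unitaryGroup_iff.1 (hGu 0 k)), one_mul]
  · intro k; rfl
  · intro k
    rw [← mulVec_mulVec, ← mulVec_mulVec]
    change G 1 k *ᵥ (star (G 0 k) *ᵥ v k) = w k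
    have e0 : G 0 k *ᵥ (-v k) = v k := by
      simp only [G, HH_mulVec, U]
      simp [smul_dotProduct, dotProduct_smul, hv1]
      module
    have e1 : star (G 0 k) *ᵥ v k = -v k := by
      conv_lhs => rw [← e0]
      rw [mulVec_mulVec, mem_unitaryGroup_iff'.1 (hGu 0 k), one_mulVec]
    rw [e1]
    have hU1 : U 1 k = v k + w k := by simp only [U]; norm_num
    have key : star (U 1 k) ⬝ᵥ U 1 k / 2 + Complex.I * ((1 * b k : ℝ) : ℂ) = star (U 1 k) ⬝ᵥ v k := by
      have hs : star (v k) ⬝ᵥ w k = star (star (w k) ⬝ᵥ v k) := by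
        rw [← star_dotProduct_star, star_star, dotProduct_comm]
      rw [hU1]
      simp only [star_add, add_dotProduct, dotProduct_add, hv1, hw1, hs, b]
      apply Complex.ext <;> simp <;> ring
    simp only [G, HH_mulVec]
    rw [dotProduct_neg, key, mul_neg, inv_mul_cancel₀, hU1]
    · module
    · rw [← key]; exact HH_den (hU0 1 k) _

lemma approx {D : ℕ} {E : Type*} [NormedAddCommGroup E] [NormedSpace ℝ E] [CompleteSpace E]
    (v : (Fin D → ℝ) → E) (hc : Continuous v)
    (hp : ∀ (k : Fin D → ℝ) (n : Fin D → ℤ), v (k + fun i => (n i : ℝ)) = v k) :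
    ∃ v' : (Fin D → ℝ) → E, ContDiff ℝ 1 v' ∧
      (∀ (k : Fin D → ℝ) (n : Fin D → ℤ), v' (k + fun i => (n i : ℝ)) = v' k) ∧
      ∀ x, dist (v' x) (v x) < 1 := by
  have huc : UniformContinuousOn v (Metric.closedBall 0 2) :=
    (isCompact_closedBall _ _).uniformContinuousOn_of_continuous hc.continuousOn
  obtain ⟨δ, hδ, H⟩ := Metric.uniformContinuousOn_iff.1 huc (1/2) (by norm_num)
  have H' : ∀ x y : Fin D → ℝ, dist x y < min δ 1 → dist (v x) (v y) < 1/2 := by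
    intro x y hxy
    let n : Fin D → ℤ := fun i => - ⌊y i⌋
    rw [← hp x n, ← hp y n]
    have hy : ‖y + fun i => (n i : ℝ)‖ ≤ 1 := by
      rw [pi_norm_le_iff_of_nonneg zero_le_one]
      intro i
      simp only [n, Pi.add_apply, Int.cast_neg, ← sub_eq_add_neg, Int.self_sub_floor]
      rw [Real.norm_of_nonneg (Int.fract_nonneg _)]
      exact (Int.fract_lt_one _).le
    have hd : dist (x + fun i => (n i : ℝ)) (y + fun i => (n i : ℝ)) < min δ 1 := by
      rwa [dist_add_right]
    refine H _ ?_ _ ?_ (hd.trans_le (min_le_left _ _))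
    · rw [mem_closedBall_zero_iff]
      have := norm_le_norm_add_norm_sub' (x + fun i => (n i : ℝ)) (y + fun i => (n i : ℝ))
      rw [← dist_eq_norm] at this
      have h3 := hd.trans_le (min_le_right _ _)
      linarith
    · rw [mem_closedBall_zero_iff]; linarith
  let φ : ContDiffBump (0 : Fin D → ℝ) := ⟨min δ 1 / 2, min δ 1, by positivity, by
    have : 0 < min δ 1 := by positivity
    linarith⟩
  refine ⟨MeasureTheory.convolution (φ.normed MeasureTheory.volume) v (ContinuousLinearMap.lsmul ℝ ℝ)
    MeasureTheory.volume, ?_, ?_, ?_⟩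
  · exact φ.hasCompactSupport_normed.contDiff_convolution_left _ φ.contDiff_normed hc.locallyIntegrable
  · intro k n
    simp only [MeasureTheory.convolution]
    congr 1; ext t
    rw [add_sub_right_comm, hp]
  · intro x
    refine (φ.dist_normed_convolution_le (ε := 1/2) hc.aestronglyMeasurable ?_).trans_lt (by norm_num)
    intro y hy
    exact (H' y x hy).le

lemma ofLp_unit {m : ℕ} {x : EuclideanSpace ℂ (Fin m)} : star x.ofLp ⬝ᵥ x.ofLp = 1 ↔ ‖x‖ = 1 := by
  have : star x.ofLp ⬝ᵥ x.ofLp = ((‖x‖ ^ 2 : ℝ) : ℂ) := by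
    rw [dotProduct_comm, ← EuclideanSpace.inner_eq_star_dotProduct, inner_self_eq_norm_sq_to_K]
    simp
  rw [this]
  norm_cast
  exact pow_eq_one_iff_of_nonneg (norm_nonneg x) two_ne_zero

lemma normalize_ne {m : ℕ} {x y : EuclideanSpace ℂ (Fin m)} (hy : ‖y‖ = 1) (h : dist x y < 1) :
    x ≠ 0 ∧ ‖x‖⁻¹ • x ≠ - y := by
  have hx : x ≠ 0 := by
    rintro rfl
    rw [dist_zero_left, hy] at h
    exact lt_irrefl _ h
  refine ⟨hx, fun h' => ?_⟩
  have hx' : ‖x‖ ≠ 0 := norm_ne_zero_iff.2 hx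
  have h2 : x = - (‖x‖ • y) := by
    rw [← smul_neg, ← h', smul_smul, mul_inv_cancel₀ hx', one_smul]
  have h3 : x - y = -((‖x‖ + 1) • y) := by
    rw [add_smul, one_smul, neg_add, ← h2]; abel
  rw [dist_eq_norm, h3, norm_neg, norm_smul, hy, Real.norm_of_nonneg (by positivity)] at h
  have := norm_nonneg x
  linarith

lemma norm_normalize {m : ℕ} {x : EuclideanSpace ℂ (Fin m)} (hx : x ≠ 0) : ‖‖x‖⁻¹ • x‖ = 1 := by
  rw [norm_smul, norm_inv, norm_norm, inv_mul_cancel₀ (norm_ne_zero_iff.2 hx)]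

lemma reduce {D m : ℕ} (hD : D ≤ 2) {β : (Fin D → ℝ) → Matrix (Fin (m+2)) (Fin (m+2)) ℂ} (hβ : Fam β) :
    ∃ γ, Homo β γ ∧ ∀ k, γ k *ᵥ Pi.single 0 1 = Pi.single 0 1 := by
  have hβ' := hβ
  obtain ⟨hc, hu, hp⟩ := hβ'
  let v : (Fin D → ℝ) → EuclideanSpace ℂ (Fin (m+2)) := fun k => WithLp.toLp 2 (β k *ᵥ Pi.single 0 1)
  have hvc : Continuous v := (PiLp.continuous_toLp 2 _).comp (hc.matrix_mulVec continuous_const)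
  have hv1 : ∀ k, ‖v k‖ = 1 := fun k => ofLp_unit.1 (col_unit (hu k))
  obtain ⟨v', hv's, hv'p, hv'd⟩ := approx v hvc (fun k n => by simp only [v, hp])
  have hv'0 : ∀ k, v' k ≠ 0 := fun k => (normalize_ne (hv1 k) (hv'd k)).1
  let f : (Fin D → ℝ) × ℝ → EuclideanSpace ℂ (Fin (m+2)) := fun p => p.2 • v' p.1
  have hf : ContDiff ℝ 1 f := contDiff_snd.smul (hv's.comp contDiff_fst)
  have hfr : Module.finrank ℝ ((Fin D → ℝ) × ℝ) < Module.finrank ℝ (EuclideanSpace ℂ (Fin (m+2))) := by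
    rw [← Module.finrank_mul_finrank ℝ ℂ (EuclideanSpace ℂ (Fin (m+2)))]
    simp
    omega
  have hdense := hf.dense_compl_range_of_finrank_lt_finrank hfr
  let e : EuclideanSpace ℂ (Fin (m+2)) := WithLp.toLp 2 (Pi.single 0 1)
  have he : ‖e‖ = 1 := ofLp_unit.1 (by simp [e])
  obtain ⟨w, hw, hwe⟩ := hdense.exists_dist_lt e (zero_lt_one)
  rw [dist_comm] at hwe
  obtain ⟨hw0, hwne⟩ := normalize_ne he hwe
  -- first move
  obtain ⟨γ₁, h₁, hγ₁⟩ := move hβ (fun k => (‖v' k‖⁻¹ • v' k).ofLp)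
    ((PiLp.continuous_ofLp 2 _).comp ((hv's.continuous.norm.inv₀ fun k => norm_ne_zero_iff.2 (hv'0 k)).smul hv's.continuous))
    (fun k n => by simp only [hv'p]) (fun k => ofLp_unit.2 (norm_normalize (hv'0 k)))
    (fun k h => (normalize_ne (hv1 k) (hv'd k)).2 (by
      apply WithLp.ofLp_injective 2
      rw [h]; rfl))
  obtain ⟨γ₂, h₂, hγ₂⟩ := move h₁.fam_right (fun k => (‖w‖⁻¹ • w).ofLp) continuous_const
    (fun k n => rfl) (fun k => ofLp_unit.2 (norm_normalize hw0)) (by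
      intro k h
      rw [hγ₁] at h
      have h' : ‖w‖⁻¹ • w = - (‖v' k‖⁻¹ • v' k) := WithLp.ofLp_injective 2 (by rw [h]; rfl)
      apply hw
      refine ⟨(k, -(‖w‖ * ‖v' k‖⁻¹)), ?_⟩
      simp only [f]
      rw [neg_smul, mul_smul, ← smul_neg, ← h', smul_smul, mul_inv_cancel₀ (norm_ne_zero_iff.2 hw0), one_smul])
  obtain ⟨γ₃, h₃, hγ₃⟩ := move h₂.fam_right (fun k => e.ofLp) continuous_const
    (fun k n => rfl) (fun k => ofLp_unit.2 he) (by
      intro k h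
      rw [hγ₂] at h
      apply hwne
      have h' : e = - (‖w‖⁻¹ • w) := WithLp.ofLp_injective 2 (by rw [h]; rfl)
      rw [h', neg_neg])
  exact ⟨γ₃, h₁.trans (h₂.trans h₃), hγ₃⟩

/-- block embedding -/
def JJ {m : ℕ} (B : Matrix (Fin m) (Fin m) ℂ) : Matrix (Fin (m+1)) (Fin (m+1)) ℂ :=
  Matrix.of (Fin.cons (Fin.cons 1 0) (fun i => Fin.cons 0 (B i)))

lemma JJ_mul {m : ℕ} (B C : Matrix (Fin m) (Fin m) ℂ) : JJ B * JJ C = JJ (B * C) := by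
  ext i j
  refine Fin.cases ?_ (fun i => ?_) i <;> refine Fin.cases ?_ (fun j => ?_) j <;>
    simp [JJ, mul_apply, Fin.sum_univ_succ]

lemma JJ_one {m : ℕ} : JJ (1 : Matrix (Fin m) (Fin m) ℂ) = 1 := by
  ext i j
  refine Fin.cases ?_ (fun i => ?_) i <;> refine Fin.cases ?_ (fun j => ?_) j <;>
    simp [JJ, one_apply, Fin.succ_ne_zero, (Fin.succ_ne_zero _).symm]

lemma JJ_star {m : ℕ} (B : Matrix (Fin m) (Fin m) ℂ) : star (JJ B) = JJ (star B) := by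
  ext i j
  refine Fin.cases ?_ (fun i => ?_) i <;> refine Fin.cases ?_ (fun j => ?_) j <;>
    simp [JJ, star_apply]

lemma JJ_sub {m : ℕ} (B : Matrix (Fin m) (Fin m) ℂ) : (JJ B).submatrix Fin.succ Fin.succ = B := by
  ext i j; simp [JJ]

lemma JJ_inj {m : ℕ} {B C : Matrix (Fin m) (Fin m) ℂ} (h : JJ B = JJ C) : B = C := by
  rw [← JJ_sub B, h, JJ_sub]

lemma JJ_unitary {m : ℕ} {B : Matrix (Fin m) (Fin m) ℂ} :
    JJ B ∈ unitaryGroup (Fin (m+1)) ℂ ↔ B ∈ unitaryGroup (Fin m) ℂ := by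
  rw [mem_unitaryGroup_iff, mem_unitaryGroup_iff, JJ_star, JJ_mul, ← JJ_one]
  exact ⟨JJ_inj, fun h => by rw [h]⟩

lemma JJ_det {m : ℕ} (B : Matrix (Fin m) (Fin m) ℂ) : (JJ B).det = B.det := by
  rw [det_succ_column_zero, Fin.sum_univ_succ]
  have : (JJ B).submatrix (Fin.succAbove 0) Fin.succ = B := by
    rw [Fin.succAbove_zero]; exact JJ_sub B
  rw [this]
  simp [JJ]

lemma JJ_cont {m : ℕ} : Continuous (JJ : Matrix (Fin m) (Fin m) ℂ → _) := by
  refine continuous_matrix fun i j => ?_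
  refine Fin.cases ?_ (fun i => ?_) i <;> refine Fin.cases ?_ (fun j => ?_) j <;>
    simp [JJ] <;> fun_prop

lemma eq_JJ {m : ℕ} {B : Matrix (Fin (m+1)) (Fin (m+1)) ℂ} (hB : B ∈ unitaryGroup (Fin (m+1)) ℂ)
    (h : B *ᵥ Pi.single 0 1 = Pi.single 0 1) : B = JJ (B.submatrix Fin.succ Fin.succ) := by
  have h' : star B *ᵥ Pi.single 0 1 = Pi.single 0 1 := by
    conv_lhs => rw [← h]
    rw [mulVec_mulVec, mem_unitaryGroup_iff'.1 hB, one_mulVec]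
  rw [mulVec_single_one] at h h'
  have h1 : ∀ i, B i 0 = Pi.single (M := fun _ => ℂ) 0 1 i := fun i => congrFun h i
  have h2 : ∀ i, star (B 0 i) = Pi.single (M := fun _ => ℂ) 0 1 i := fun i => congrFun h' i
  ext i j
  refine Fin.cases ?_ (fun i => ?_) i <;> refine Fin.cases ?_ (fun j => ?_) j
  · simp [JJ, h1]
  · have := h2 j.succ
    simp [Pi.single_apply, Fin.succ_ne_zero] at this
    simp [JJ, this]
  · simp [JJ, h1]
  · simp [JJ]

lemma null_of_det {D : ℕ} (hD : D ≤ 2) : ∀ (m : ℕ) (β : (Fin D → ℝ) → Matrix (Fin m) (Fin m) ℂ),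
    Fam β → Homo (fun k => (β k).det) (fun _ => 1) → Homo β (fun _ => 1)
  | 0, β, hβ, _ => by
      refine ⟨fun _ => β, hβ.1.comp continuous_snd, fun _ => hβ.2.1, fun _ => hβ.2.2, fun _ => rfl, 
        fun k => Subsingleton.elim _ _⟩
  | 1, β, hβ, ⟨g, hc, hu, hp, h0, h1⟩ => by
      refine ⟨fun t k => Matrix.of fun _ _ => g t k, ?_, ?_, ?_, ?_, ?_⟩
      · exact continuous_matrix fun _ _ => hc
      · intro t k
        rw [← unitaryGroup, mem_unitaryGroup_iff]
        ext i j
        have := (Unitary.mem_iff.1 (hu t k)).2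
        obtain rfl := Subsingleton.elim i j
        simpa [mul_apply] using this
      · intro t k n; simp only [hp]
      · intro k; ext i j; simp [h0, Subsingleton.elim i 0, Subsingleton.elim j 0]
      · intro k; ext i j; obtain rfl := Subsingleton.elim i j; simp [h1]
  | m+2, β, hβ, hd => by
      obtain ⟨γ, hγ, hγe⟩ := reduce hD hβ
      have hγF := hγ.fam_right
      have hJ : ∀ k, γ k = JJ ((γ k).submatrix Fin.succ Fin.succ) := fun k => eq_JJ (hγF.2.1 k) (hγe k)
      let δ : (Fin D → ℝ) → Matrix (Fin (m+1)) (Fin (m+1)) ℂ := fun k => (γ k).submatrix Fin.succ Fin.succ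
      have hJ' : ∀ k, γ k = JJ (δ k) := hJ
      have hδ : Fam δ := ⟨hγF.1.matrix_submatrix _ _, fun k => JJ_unitary.1 (by rw [← hJ']; exact hγF.2.1 k),
        fun k n => by simp only [δ, hγF.2.2]⟩
      have hdet : Homo (fun k => (δ k).det) (fun _ => 1) := by
        have := hγ.det.symm.trans hd
        simpa only [hJ', JJ_det] using this
      obtain ⟨A, hc, hu, hp, h0, h1⟩ := null_of_det hD (m+1) δ hδ hdet
      refine hγ.trans ⟨fun t k => JJ (A t k), JJ_cont.comp hc, fun t k => JJ_unitary.2 (hu t k),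
        fun t k n => by simp only [hp], fun k => by simp only [h0, hJ'], fun k => by simp only [h1, JJ_one]⟩

lemma exists_lift {E : Type*} [NormedAddCommGroup E] [NormedSpace ℝ E] (f : E → ℂ) (hf : Continuous f)
    (hu : ∀ x, f x ∈ unitary ℂ) :
    ∃ θ : E → ℝ, Continuous θ ∧ ∀ x, f x = Complex.exp (Complex.I * (θ x : ℂ)) := by
  have hn : ∀ x, f x ∈ Submonoid.unitSphere ℂ := by
    intro x
    exact mem_sphere_zero_iff_norm.2 (CStarRing.norm_of_mem_unitary (hu x))
  let F : C(E, Circle) := ⟨fun x => ⟨f x, hn x⟩, hf.subtype_mk _⟩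
  obtain ⟨t, ht⟩ := Circle.exp_surjective (F 0)
  obtain ⟨G, ⟨-, hG⟩, -⟩ := Circle.isCoveringMap_exp.existsUnique_continuousMap_lifts F 0 t ht
  refine ⟨G, G.continuous, fun x => ?_⟩
  have := congrArg (fun z : Circle => (z : ℂ)) (congrFun hG x)
  simp only [Function.comp_apply, Circle.coe_exp] at this
  rw [mul_comm, this]; rfl

lemma exp_eq {a b : ℝ} (h : Complex.exp (Complex.I * (a : ℂ)) = Complex.exp (Complex.I * (b : ℂ))) :
    ∃ n : ℤ, a = b + 2 * Real.pi * n := by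
  obtain ⟨n, hn⟩ := Complex.exp_eq_exp_iff_exists_int.1 h
  refine ⟨n, ?_⟩
  have h2 : Complex.I * (a : ℂ) = Complex.I * ((b + 2 * Real.pi * n : ℝ) : ℂ) := by
    rw [hn]; push_cast; ring
  exact_mod_cast mul_left_cancel₀ Complex.I_ne_zero h2

/-- a continuous function with values in `2πℤ` is constant -/
lemma const_of_int {E : Type*} [NormedAddCommGroup E] [NormedSpace ℝ E] (f : E → ℝ) (hf : Continuous f)
    (h : ∀ x, ∃ n : ℤ, f x = 2 * Real.pi * n) (x y : E) : f x = f y := by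
  choose n hn using h
  have hn' : ∀ x, (n x : ℝ) = f x / (2 * Real.pi) := by
    intro x; rw [hn x]; field_simp
  have hc : Continuous n := by
    apply Int.isClosedEmbedding_coe_real.isEmbedding.continuous_iff.2
    have : (Int.cast ∘ n : E → ℝ) = fun x => f x / (2 * Real.pi) := funext hn'
    rw [this]; fun_prop
  rw [hn, hn, PreconnectedSpace.constant inferInstance hc (x := x) (y := y)]

lemma winding_unique {u : ℝ → ℂ} {n n' : ℤ} (h : IsWindingNumber u n) (h' : IsWindingNumber u n') : n = n' := by
  obtain ⟨θ, hc, he, h1⟩ := h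
  obtain ⟨θ', hc', he', h1'⟩ := h'
  have := const_of_int (fun t => θ t - θ' t) (hc.sub hc') (fun t => by
    obtain ⟨j, hj⟩ := exp_eq ((he t).symm.trans (he' t))
    exact ⟨j, by rw [hj]; ring⟩) 1 0
  simp only [h1, h1'] at this
  have h3 : 2 * Real.pi * (n : ℝ) = 2 * Real.pi * n' := by linarith
  exact_mod_cast mul_left_cancel₀ Real.two_pi_pos.ne' h3

lemma single_shift {D : ℕ} (j : Fin D) :
    (fun i => ((Pi.single j 1 : Fin D → ℤ) i : ℝ)) = Pi.single j (1:ℝ) := by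
  ext i
  by_cases h : i = j
  · subst h; simp
  · simp [h]

lemma forward {D : ℕ} {f g : (Fin D → ℝ) → ℂ} (h : Homo f g) (j : Fin D) :
    ∃ n : ℤ, IsWindingNumber (fun t => f (Pi.single j t)) n ∧
      IsWindingNumber (fun t => g (Pi.single j t)) n := by
  obtain ⟨A, hc, hu, hp, h0, h1⟩ := h
  obtain ⟨θ, hθ, he⟩ := exists_lift (fun p : ℝ × (Fin D → ℝ) => A p.1 p.2) hc (fun p => hu _ _)
  have hs : Continuous (fun t : ℝ => (Pi.single j t : Fin D → ℝ)) :=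
      continuous_single (A := fun _ : Fin D => ℝ) j
  have hint : ∀ t, ∃ n : ℤ, θ (t, Pi.single j 1) = θ (t, 0) + 2 * Real.pi * n := by
    intro t
    apply exp_eq
    rw [← he, ← he]
    have := hp t 0 (Pi.single j 1)
    rw [single_shift, zero_add] at this
    exact this
  have hconst := const_of_int (fun t => θ (t, Pi.single j 1) - θ (t, 0)) (by fun_prop) (fun t => by
    obtain ⟨n, hn⟩ := hint t
    exact ⟨n, by rw [hn]; ring⟩)
  obtain ⟨n, hn⟩ := hint 0
  refine ⟨n, ⟨fun t => θ (0, Pi.single j t), by fun_prop, fun t => ?_, ?_⟩,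
    ⟨fun t => θ (1, Pi.single j t), by fun_prop, fun t => ?_, ?_⟩⟩
  · rw [← he]; exact (h0 _).symm
  · simpa using hn
  · rw [← he]; exact (h1 _).symm
  · have := hconst 1 0
    simp only [Pi.single_zero] at *
    linarith

lemma backward {D : ℕ} {f g : (Fin D → ℝ) → ℂ} (hf : Fam f) (hg : Fam g)
    (h : ∀ (j : Fin D) (n : ℤ), IsWindingNumber (fun t => f (Pi.single j t)) n ↔
      IsWindingNumber (fun t => g (Pi.single j t)) n) :
    Homo (fun k => star (f k) * g k) (fun _ => 1) := by
  obtain ⟨θ, hθ, he⟩ := exists_lift f hf.1 hf.2.1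
  obtain ⟨η, hη, he'⟩ := exists_lift g hg.1 hg.2.1
  have key : ∀ {f : (Fin D → ℝ) → ℂ} (_ : Fam f) {θ : (Fin D → ℝ) → ℝ} (_ : Continuous θ)
      (_ : ∀ x, f x = Complex.exp (Complex.I * (θ x : ℂ))) (k : Fin D → ℝ) (n : Fin D → ℤ),
      ∃ c : ℤ, θ (k + fun i => (n i : ℝ)) = θ k + 2 * Real.pi * c := by
    intro f hf θ hθ he k n
    apply exp_eq
    rw [← he, ← he, hf.2.2]
  have key1 : ∀ {f : (Fin D → ℝ) → ℂ} (_ : Fam f) {θ : (Fin D → ℝ) → ℝ} (_ : Continuous θ)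
      (_ : ∀ x, f x = Complex.exp (Complex.I * (θ x : ℂ))) (j : Fin D),
      ∃ c : ℤ, θ (Pi.single j 1) = θ 0 + 2 * Real.pi * c ∧ 
        IsWindingNumber (fun t => f (Pi.single j t)) c := by
    intro f hf θ hθ he j
    obtain ⟨c, hc⟩ := key hf hθ he 0 (Pi.single j 1)
    rw [single_shift, zero_add] at hc
    have hs : Continuous (fun t : ℝ => (Pi.single j t : Fin D → ℝ)) :=
      continuous_single (A := fun _ : Fin D => ℝ) j
    exact ⟨c, hc, fun t => θ (Pi.single j t), by fun_prop, fun t => he _, by simpa using hc⟩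
  let ψ : (Fin D → ℝ) → ℝ := fun k => η k - θ k
  have hψ : Continuous ψ := hη.sub hθ
  have hψint : ∀ (k : Fin D → ℝ) (n : Fin D → ℤ),
      ∃ c : ℤ, ψ (k + fun i => (n i : ℝ)) - ψ k = 2 * Real.pi * c := by
    intro k n
    obtain ⟨c, hc⟩ := key hf hθ he k n
    obtain ⟨c', hc'⟩ := key hg hη he' k n
    exact ⟨c' - c, by simp only [ψ, hc, hc']; push_cast; ring⟩
  have hψc : ∀ (n : Fin D → ℤ) (k : Fin D → ℝ),
      ψ (k + fun i => (n i : ℝ)) - ψ k = ψ (fun i => (n i : ℝ)) - ψ 0 := by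
    intro n k
    have := const_of_int (fun k => ψ (k + fun i => (n i : ℝ)) - ψ k) (by fun_prop) (fun k => hψint k n) k 0
    simpa using this
  let c : (Fin D → ℤ) →+ ℝ := 
    { toFun := fun n => ψ (fun i => (n i : ℝ)) - ψ 0
      map_zero' := by
        have : (fun i : Fin D => (((0 : Fin D → ℤ) i : ℤ) : ℝ)) = 0 := by ext; simp
        rw [this, sub_self]
      map_add' := by
        intro a b
        have h1 := hψc b (fun i => (a i : ℝ))
        have : (fun i : Fin D => (((a + b) i : ℤ) : ℝ)) = (fun i => (a i : ℝ)) + fun i => (b i : ℝ) := by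
          ext; simp
        rw [this]; linarith }
  have hc0 : c = 0 := by
    apply AddMonoidHom.functions_ext'
    intro j
    apply AddMonoidHom.ext_int
    change ψ (fun i => ((Pi.single j 1 : Fin D → ℤ) i : ℝ)) - ψ 0 = 0
    rw [single_shift]
    obtain ⟨a, ha, ha'⟩ := key1 hf hθ he j
    obtain ⟨b, hb, hb'⟩ := key1 hg hη he' j
    obtain rfl := winding_unique ((h j a).1 ha') hb'
    simp only [ψ, ha, hb]; ring
  have hψp : ∀ (k : Fin D → ℝ) (n : Fin D → ℤ), ψ (k + fun i => (n i : ℝ)) = ψ k := by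
    intro k n
    have h1 : c n = 0 := by rw [hc0]; rfl
    have h2 := hψc n k
    change ψ (fun i => (n i : ℝ)) - ψ 0 = 0 at h1
    linarith
  refine ⟨fun t k => Complex.exp (Complex.I * (((1 - t) * ψ k : ℝ) : ℂ)), by fun_prop, ?_, ?_, ?_, ?_⟩
  · intro t k
    have : ∀ r : ℝ, Complex.exp (Complex.I * (r : ℂ)) ∈ unitary ℂ := by
      intro r
      rw [Unitary.mem_iff_self_mul_star, Complex.star_def, ← Complex.exp_conj, ← Complex.exp_add]
      simp
    exact this _
  · intro t k n; simp only [hψp]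
  · intro k
    simp only [he, he', ψ, Complex.star_def, ← Complex.exp_conj, ← Complex.exp_add]
    congr 1
    simp
    ring
  · intro k; simp
end HW

/-- For `D ≤ 2`, two continuous `ℤ^D`-periodic families of unitary
`m × m` matrices are homotopic through continuous `ℤ^D`-periodic unitary families if
and only if the winding numbers of their determinants along each coordinate direction
coincide. -/
theorem homotopic_iff_equal_det_windings (D m : ℕ) (hD : D ≤ 2)
    (α₀ α₁ : (Fin D → ℝ) → Matrix (Fin m) (Fin m) ℂ)
    (hc0 : Continuous α₀) (hc1 : Continuous α₁)
    (hu0 : ∀ k, α₀ k ∈ Matrix.unitaryGroup (Fin m) ℂ)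
    (hu1 : ∀ k, α₁ k ∈ Matrix.unitaryGroup (Fin m) ℂ)
    (hp0 : ∀ (k : Fin D → ℝ) (n : Fin D → ℤ), α₀ (k + fun i => (n i : ℝ)) = α₀ k)
    (hp1 : ∀ (k : Fin D → ℝ) (n : Fin D → ℤ), α₁ (k + fun i => (n i : ℝ)) = α₁ k) :
    (∃ A : ℝ → (Fin D → ℝ) → Matrix (Fin m) (Fin m) ℂ,
      Continuous (fun p : ℝ × (Fin D → ℝ) => A p.1 p.2) ∧
      (∀ t k, A t k ∈ Matrix.unitaryGroup (Fin m) ℂ) ∧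
      (∀ (t : ℝ) (k : Fin D → ℝ) (n : Fin D → ℤ),
        A t (k + fun i => (n i : ℝ)) = A t k) ∧
      (∀ k, A 0 k = α₀ k) ∧ (∀ k, A 1 k = α₁ k))
    ↔
    (∀ (j : Fin D) (n : ℤ),
      IsWindingNumber (fun t => (α₀ (Pi.single j t)).det) n ↔
      IsWindingNumber (fun t => (α₁ (Pi.single j t)).det) n) := by
  constructor
  · rintro h j n
    obtain ⟨n', h0, h1⟩ := HW.forward (HW.Homo.det (β := α₀) (γ := α₁) h) j
    constructor
    · intro h
      obtain rfl := HW.winding_unique h h0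
      exact h1
    · intro h
      obtain rfl := HW.winding_unique h h1
      exact h0
  · intro h
    have hF0 : HW.Fam α₀ := ⟨hc0, hu0, hp0⟩
    have hF1 : HW.Fam α₁ := ⟨hc1, hu1, hp1⟩
    have hd0 : HW.Fam (fun k => (α₀ k).det) := ⟨hc0.matrix_det, fun k => Matrix.det_of_mem_unitary (hu0 k),
      fun k n => by simp only [hp0]⟩
    have hd1 : HW.Fam (fun k => (α₁ k).det) := ⟨hc1.matrix_det, fun k => Matrix.det_of_mem_unitary (hu1 k),
      fun k n => by simp only [hp1]⟩
    have hb := HW.backward hd0 hd1 h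
    have hβ : HW.Fam (fun k => star (α₀ k) * α₁ k) := ⟨hc0.star.mul hc1,
      fun k => mul_mem (Unitary.star_mem (hu0 k)) (hu1 k), fun k n => by simp only [hp0, hp1]⟩
    have hn := HW.null_of_det hD m _ hβ (by
      simpa only [Matrix.det_mul, Matrix.star_eq_conjTranspose, Matrix.det_conjTranspose] using hb)
    have hfin := (hn.mul_left hF0).symm
    have e : (fun k => α₀ k * (star (α₀ k) * α₁ k)) = α₁ := by
      funext k
      rw [← mul_assoc, Matrix.mem_unitaryGroup_iff.1 (hu0 k), one_mul]
    simp only [mul_one] at hfin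
    rw [e] at hfin
    exact hfin
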